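/- Let r > 0, t > 0 and let n ∈ ℕ be even. With x_0 = x_R = 0, let p(x,t) = f_L(x) + e^{−rt}·( f_{N(0,t)}(x) − (f_{N(0,t)} * f_L)(x) ), where f_L(x) = √(r/2)·e^{−√(2r)·|x|} and f_{N(0,t)}(x) = (2πt)^{−1/2}·e^{−x²/(2t)}. Then ∫_ℝ x^n·p(x,t) dx = (2r)^{−n/2}·n! + e^{−rt}·( t^{n/2}·(n−1)!! − Σ_{k equals 0 to n, k even} C(n,k)·t^{k/2}·(k−1)!!·(2r)^{−(n−k)/2}·(n−k)! ). -/

import Mathlib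

open MeasureTheory

lemma aux_conv_moment (f g : ℝ → ℝ) (hf : ∀ k : ℕ, Integrable (fun x => x ^ k * f x))
    (hg : ∀ k : ℕ, Integrable (fun x => x ^ k * g x)) (n : ℕ) :
    Integrable (fun x : ℝ => x ^ n * ∫ y : ℝ, f (x - y) * g y) ∧
    (∫ x : ℝ, x ^ n * ∫ y : ℝ, f (x - y) * g y) =
      ∑ k ∈ Finset.range (n + 1), (n.choose k : ℝ) *
        ((∫ x, x ^ k * f x) * ∫ x, x ^ (n - k) * g x) := by
  have h2 : ∀ k l : ℕ, Integrable (fun p : ℝ × ℝ =>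
      (p.2 ^ l * g p.2) * ((p.1 - p.2) ^ k * f (p.1 - p.2))) (volume.prod volume) := by
    intro k l
    exact (hg l).convolution_integrand (ContinuousLinearMap.mul ℝ ℝ) (hf k)
  have hS : Integrable (fun p : ℝ × ℝ => ∑ k ∈ Finset.range (n + 1), (n.choose k : ℝ) *
      ((p.2 ^ (n - k) * g p.2) * ((p.1 - p.2) ^ k * f (p.1 - p.2)))) (volume.prod volume) :=
    integrable_finsetSum _ fun k _ => (h2 k (n - k)).const_mul _
  have hpt : ∀ x : ℝ, x ^ n * (∫ y : ℝ, f (x - y) * g y) =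
      ∫ y : ℝ, ∑ k ∈ Finset.range (n + 1), (n.choose k : ℝ) *
      ((y ^ (n - k) * g y) * ((x - y) ^ k * f (x - y))) := by
    intro x
    rw [← integral_const_mul]
    congr 1; ext y
    have : x ^ n = ((x - y) + y) ^ n := by ring
    rw [this, add_pow, Finset.sum_mul]
    refine Finset.sum_congr rfl fun k _ => ?_
    ring
  simp_rw [hpt]
  refine ⟨hS.integral_prod_left, ?_⟩
  rw [← integral_prod _ hS, integral_finsetSum _ fun k _ => (h2 k (n - k)).const_mul _]
  refine Finset.sum_congr rfl fun k _ => ?_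
  rw [integral_const_mul, integral_prod _ (h2 k (n - k))]
  congr 1
  have := integral_convolution (ContinuousLinearMap.mul ℝ ℝ) (hg (n - k)) (hf k)
  simp only [convolution, ContinuousLinearMap.mul_apply'] at this
  rw [this, mul_comm]

lemma aux_odd (f : ℝ → ℝ) (hf : ∀ x, f (-x) = f x) (k : ℕ) (hk : Odd k) :
    ∫ x, x ^ k * f x = 0 := by
  have h := integral_neg_eq_self (fun x : ℝ => x ^ k * f x) volume
  simp only [hf, hk.neg_pow, neg_mul, integral_neg] at h
  linarith

lemma aux_lap_abs (s : ℝ) (hs : 0 < s) (k : ℕ) :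
    ∫ x : ℝ, |x| ^ k * Real.exp (-s * |x|) = 2 * ((s ^ (k + 1))⁻¹ * k.factorial) := by
  rw [integral_comp_abs (f := fun x => x ^ k * Real.exp (-s * x))]
  have h := Real.integral_rpow_mul_exp_neg_mul_Ioi (a := (k : ℝ) + 1) (by positivity) hs
  simp only [add_sub_cancel_right, Real.rpow_natCast, Real.Gamma_nat_eq_factorial] at h
  simp only [neg_mul]
  rw [h, ← Nat.cast_add_one, Real.rpow_natCast]
  simp

lemma aux_lap_int (s : ℝ) (hs : 0 < s) (k : ℕ) :
    Integrable (fun x : ℝ => x ^ k * Real.exp (-s * |x|)) := by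
  have h : Integrable (fun x : ℝ => |x| ^ k * Real.exp (-s * |x|)) := by
    by_contra hc
    have h1 := aux_lap_abs s hs k
    rw [integral_undef hc] at h1
    have : 0 < 2 * ((s ^ (k + 1))⁻¹ * (k.factorial : ℝ)) := by positivity
    linarith
  refine h.mono' (by fun_prop) (Filter.Eventually.of_forall fun x => ?_)
  simp

lemma aux_gauss (t : ℝ) (ht : 0 < t) (m : ℕ) :
    ∫ x : ℝ, x ^ (2 * m) * (1 / Real.sqrt (2 * Real.pi * t) * Real.exp (-x ^ 2 / (2 * t))) =
      t ^ m * (Nat.doubleFactorial (2 * m - 1) : ℝ) := by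
  have h0 : ∀ x : ℝ, x ^ (2 * m) * (1 / Real.sqrt (2 * Real.pi * t) *
      Real.exp (-x ^ 2 / (2 * t))) = (fun y : ℝ => 1 / Real.sqrt (2 * Real.pi * t) *
        (y ^ (2 * m) * Real.exp (-(1 / (2 * t)) * y ^ 2))) |x| := by
    intro x
    simp only [pow_mul, sq_abs]
    rw [show -x ^ 2 / (2 * t) = -(1 / (2 * t)) * x ^ 2 by ring]
    ring
  rw [integral_congr_ae (Filter.Eventually.of_forall h0),
    integral_comp_abs (f := fun y : ℝ => 1 / Real.sqrt (2 * Real.pi * t) *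
        (y ^ (2 * m) * Real.exp (-(1 / (2 * t)) * y ^ 2))), integral_const_mul]
  have h := integral_rpow_mul_exp_neg_mul_rpow (p := 2) (q := ((2 * m : ℕ) : ℝ))
    (b := 1 / (2 * t)) (by norm_num) (by have : (0:ℝ) ≤ ((2 * m : ℕ) : ℝ) := by positivity
                                         linarith) (by positivity)
  simp only [Real.rpow_natCast, Real.rpow_ofNat] at h
  rw [h]
  have e1 : (((2 * m : ℕ) : ℝ) + 1) / 2 = m + 1 / 2 := by push_cast; ring
  have e2 : -(((2 * m : ℕ) : ℝ) + 1) / 2 = -(m + 1 / 2) := by push_cast; ring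
  rw [e1, e2, Real.Gamma_nat_add_half, one_div (2 * t), Real.inv_rpow (by positivity),
    Real.rpow_neg (by positivity), inv_inv, Real.rpow_add (by positivity), Real.rpow_natCast,
    ← Real.sqrt_eq_rpow, show 2 * Real.pi * t = Real.pi * (2 * t) by ring,
    Real.sqrt_mul Real.pi_pos.le, mul_pow]
  have := Real.sqrt_pos.mpr Real.pi_pos
  have : 0 < Real.sqrt (2 * t) := by positivity
  field_simp

lemma aux_gauss_int (t : ℝ) (ht : 0 < t) (k : ℕ) :
    Integrable fun x : ℝ =>
      x ^ k * (1 / Real.sqrt (2 * Real.pi * t) * Real.exp (-x ^ 2 / (2 * t))) := by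
  have h := (integrable_rpow_mul_exp_neg_mul_sq (b := 1 / (2 * t)) (by positivity) (s := (k : ℝ))
    (by have : (0:ℝ) ≤ (k : ℝ) := by positivity
        linarith)).const_mul (1 / Real.sqrt (2 * Real.pi * t))
  refine h.congr (Filter.Eventually.of_forall fun x => ?_)
  simp only [Real.rpow_natCast]
  rw [show -x ^ 2 / (2 * t) = -(1 / (2 * t)) * x ^ 2 by ring]
  ring

/-- Even moments of Brownian motion started at `0` with Poissonian resetting at
rate `r > 0` to `0`: for even `n`, the `n`-th moment of the explicit density
`p(x,t) = f_L(x) + e^{-rt}·(f_{N(0,t)}(x) - (f_{N(0,t)} * f_L)(x))` equals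
`(2r)^{-n/2}·n! + e^{-rt}·(t^{n/2}·(n-1)!! - Σ_{k even} C(n,k)·t^{k/2}·(k-1)!!·(2r)^{-(n-k)/2}·(n-k)!)`. -/
theorem resetting_even_moments (r t : ℝ) (hr : 0 < r) (ht : 0 < t)
    (n : ℕ) (hn : Even n)
    (fL fN0 p : ℝ → ℝ)
    (hfL : ∀ x, fL x = Real.sqrt (r / 2) * Real.exp (-(Real.sqrt (2 * r)) * |x|))
    (hfN0 : ∀ x, fN0 x = 1 / Real.sqrt (2 * Real.pi * t) * Real.exp (-x ^ 2 / (2 * t)))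
    (hp : ∀ x, p x = fL x + Real.exp (-r * t) * (fN0 x - ∫ y : ℝ, fN0 (x - y) * fL y)) :
    (∫ x : ℝ, x ^ n * p x) =
      (2 * r) ^ (-(n : ℝ) / 2) * (n.factorial : ℝ) +
        Real.exp (-r * t) *
          (t ^ ((n : ℝ) / 2) * (Nat.doubleFactorial (n - 1) : ℝ) -
            ∑ k ∈ Finset.range (n + 1),
              (if Even k then
                (n.choose k : ℝ) * t ^ ((k : ℝ) / 2) * (Nat.doubleFactorial (k - 1) : ℝ) *
                  (2 * r) ^ (-((n - k : ℕ) : ℝ) / 2) * ((n - k).factorial : ℝ)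
              else 0)) := by
  have hs : 0 < Real.sqrt (2 * r) := by positivity
  have hrs : ∀ m : ℕ, (2 * r) ^ (-(m : ℝ) / 2) = (Real.sqrt (2 * r) ^ m)⁻¹ := by
    intro m
    rw [neg_div, Real.rpow_neg (by positivity), Real.sqrt_eq_rpow, ← Real.rpow_mul_natCast
      (by positivity)]
    congr 2; ring
  have hr2 : Real.sqrt (r / 2) = Real.sqrt (2 * r) / 2 := by
    rw [show r / 2 = 2 * r / 2 ^ 2 by ring, Real.sqrt_div (by positivity),
      Real.sqrt_sq (by norm_num)]
  have hLi : ∀ k : ℕ, Integrable (fun x => x ^ k * fL x) := by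
    intro k
    refine ((aux_lap_int _ hs k).const_mul (Real.sqrt (r / 2))).congr
      (Filter.Eventually.of_forall fun x => ?_)
    simp only [hfL]; ring
  have hNi : ∀ k : ℕ, Integrable (fun x => x ^ k * fN0 x) := by
    intro k
    simp only [hfN0]
    exact aux_gauss_int t ht k
  have hLm : ∀ k : ℕ, Even k →
      ∫ x, x ^ k * fL x = (2 * r) ^ (-(k : ℝ) / 2) * (k.factorial : ℝ) := by
    intro k hk
    have : ∀ x, x ^ k * fL x =
        Real.sqrt (2 * r) / 2 * (|x| ^ k * Real.exp (-Real.sqrt (2 * r) * |x|)) := by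
      intro x
      rw [hfL, hr2, hk.pow_abs]; ring
    simp_rw [this]
    rw [integral_const_mul, aux_lap_abs _ hs, hrs, pow_succ]
    field_simp
  have hNm : ∀ k : ℕ, Even k →
      ∫ x, x ^ k * fN0 x = t ^ ((k : ℝ) / 2) * (Nat.doubleFactorial (k - 1) : ℝ) := by
    intro k hk
    obtain ⟨m, rfl⟩ := hk.two_dvd
    simp_rw [hfN0]
    rw [aux_gauss t ht, show ((2 * m : ℕ) : ℝ) / 2 = m by push_cast; ring, Real.rpow_natCast]
  obtain ⟨hCi, hCm⟩ := aux_conv_moment fN0 fL hNi hLi n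
  have hpe : ∀ x, x ^ n * p x = x ^ n * fL x + Real.exp (-r * t) *
      (x ^ n * fN0 x - x ^ n * ∫ y : ℝ, fN0 (x - y) * fL y) := by
    intro x; rw [hp]; ring
  simp_rw [hpe]
  have hD : Integrable (fun x => Real.exp (-r * t) *
      (x ^ n * fN0 x - x ^ n * ∫ y : ℝ, fN0 (x - y) * fL y)) :=
    ((hNi n).sub hCi).const_mul _
  rw [integral_add (hLi n) hD, integral_const_mul,
    integral_sub (hNi n) hCi, hCm, hLm n hn, hNm n hn]
  congr 3
  refine Finset.sum_congr rfl fun k hk => ?_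
  have hkn : k ≤ n := Nat.lt_succ_iff.mp (Finset.mem_range.mp hk)
  split_ifs with hke
  · rw [hNm k hke, hLm (n - k) (by rw [Nat.even_sub hkn]; tauto)]
    ring
  · rw [aux_odd fN0 (by intro x; simp [hfN0]) k (Nat.not_even_iff_odd.mp hke)]
    simp
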